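/- Suppose λ_0, …, λ_{ns−1} are pairwise distinct and satisfy the local constraints. Then for any c ≥ 1 pairwise distinct indices a_0, …, a_{c−1} ∈ {0,…,n/s−1} and any nonempty subsets B_0, …, B_{c−1} ⊆ {0,…,s−1} with |B_0| + |B_1| + … + |B_{c−1}| = t ≤ r, the ℓt × ℓt matrix [A_{a_0,B_0}^(t) | A_{a_1,B_1}^(t) | … | A_{a_{c−1},B_{c−1}}^(t)] has nonzero determinant. -/

import Mathlib

open Matrix

/-- The `u`-th digit of `i` in base `s`. -/
def digit (s i u : ℕ) : ℕ := i / s ^ u % s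

open scoped Classical in
/-- The `z`-th entry of the `(i,j)` block (a length-`t` column vector, `0 ≤ z < t`) of the
block matrix `A_{a,b}^{(t)}`; the group size is `g` (`g = s` for the first construction and
`g = s + 1` for the second), so the relevant `λ`-index is `a·s·g + b·s + j_a`. -/
noncomputable def Aent {F : Type*} [Field F] (lam : ℕ → F) (s g a b i j z : ℕ) : F :=
  if i = j then lam (a * s * g + b * s + digit s j a) ^ z
  else if digit s i a = b ∧ digit s j a ≠ b ∧ (∀ u, u ≠ a → digit s i u = digit s j u) then
    -(lam (a * s * g + b * s + digit s j a) ^ z)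
  else 0

/-- `A_{a,b}^{(t)}` as an `ℓt × ℓ` matrix; row `ρ` encodes block row `ρ / t` and
inner row `ρ % t`. -/
noncomputable def Amat {F : Type*} [Field F] (lam : ℕ → F) (s g ℓ a b t : ℕ) :
    Matrix (Fin (ℓ * t)) (Fin ℓ) F :=
  Matrix.of fun ρ j => Aent lam s g a b ((ρ : ℕ) / t) (j : ℕ) ((ρ : ℕ) % t)

/-- The `m`-th smallest element of the finite set `B ⊆ ℕ` (junk value `0` if `m ≥ |B|`). -/
def enum (B : Finset ℕ) (m : ℕ) : ℕ := (B.sort (· ≤ ·)).getD m 0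

/-- `A_{a,B}^{(t)} = [A_{a,b₁}^{(t)} | ⋯ | A_{a,b_v}^{(t)}]` as an `ℓt × ℓ|B|` matrix:
row `ρ` encodes block row `ρ / t` and inner row `ρ % t`; column `κ` selects the
`κ / ℓ`-th member of `B` and inner column `κ % ℓ`. -/
noncomputable def AmatB {F : Type*} [Field F] (lam : ℕ → F) (s g ℓ a t : ℕ) (B : Finset ℕ) :
    Matrix (Fin (ℓ * t)) (Fin (ℓ * B.card)) F :=
  Matrix.of fun ρ κ =>
    Aent lam s g a (enum B ((κ : ℕ) / ℓ)) ((ρ : ℕ) / t) ((κ : ℕ) % ℓ) ((ρ : ℕ) % t)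

/-- The local (in-group) constraints: every square matrix `A_{a,B}` (for a group index
`a < groups` and a nonempty `B ⊆ {0, …, g-1}`) is invertible. -/
def LocalConstraints {F : Type*} [Field F] (lam : ℕ → F) (s g ℓ groups : ℕ) : Prop :=
  ∀ a < groups, ∀ B ⊆ Finset.range g, B.Nonempty → (AmatB lam s g ℓ a B.card B).det ≠ 0

/-- Locate position `κ` within `c` consecutive blocks of sizes `sz 0, sz 1, …`:
returns the block index and the offset within that block. -/
def loc : ℕ → (ℕ → ℕ) → ℕ → ℕ × ℕ
  | 0, _, κ => (0, κ)
  | c + 1, sz, κ =>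
      if κ < sz 0 then (0, κ)
      else
        let p := loc c (fun i => sz (i + 1)) (κ - sz 0)
        (p.1 + 1, p.2)

/-- The horizontal concatenation `[A_{a₀,B₀}^{(t)} | A_{a₁,B₁}^{(t)} | ⋯ | A_{a_{c−1},B_{c−1}}^{(t)}]`
as an `ℓt × ℓt` square matrix (where `t = |B₀| + ⋯ + |B_{c−1}|`). -/
noncomputable def MultiCat {F : Type*} [Field F] (lam : ℕ → F) (s g ℓ t c : ℕ)
    (a : ℕ → ℕ) (B : ℕ → Finset ℕ) : Matrix (Fin (ℓ * t)) (Fin (ℓ * t)) F :=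
  Matrix.of fun ρ κ =>
    let p := loc c (fun m => ℓ * (B m).card) (κ : ℕ)
    Aent lam s g (a p.1) (enum (B p.1) (p.2 / ℓ)) ((ρ : ℕ) / t) (p.2 % ℓ) ((ρ : ℕ) % t)

/-! With respect to base-`s` digit strings, `A_{a,b}^{(t)}` is the block column
`P, X P, …, X^(t-1) P`, where `P` is invertible and `X` is diagonalised by `P`; both act on digit
`a` only. So the concatenated matrix is a block Vandermonde matrix with matrix nodes `X_{a,b}`, and
it is invertible if and only if a matrix polynomial of degree `< t` with coefficients
on the left is determined by its values at the nodes. For a single group this is the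
local constraint.

Let `W` vanish at the nodes of several groups. Interpolating `-x ^ #B` at the nodes `x` of one
group gives a monic `G` of degree `#B` vanishing there, and `W = q G`. A node `u` of another group
commutes with the nodes of the first, so `u G - G u` vanishes at them and has degree `< #B`; hence
the coefficients of `G` commute with `u` and `W(u) = q(u) G(u)`. Moreover `G(u)` is right regular:
`c G(u) = 0` gives `c G = p (X - u)`, where `p` vanishes at the nodes of the first group because
their differences with `u` are invertible. So `q` vanishes at the remaining nodes, and induction
over the groups applies.
-/

section Unisolvence

open Polynomial

section Semiring

variable {R : Type*} [Semiring R]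

lemma eval_mul_eq_zero_of_eval_right {x : R} (p : R[X]) {q : R[X]} (hq : q.eval x = 0) :
    (p * q).eval x = 0 := by
  induction p using Polynomial.induction_on' with
  | add p₁ p₂ h₁ h₂ => rw [add_mul, eval_add, h₁, h₂, add_zero]
  | monomial k c =>
    rw [← C_mul_X_pow_eq_monomial, mul_assoc, X_pow_mul, eval_C_mul, eval_mul_X_pow, hq, zero_mul,
      mul_zero]

lemma eval_mul_of_commute_coeff {x : R} (p : R[X]) {q : R[X]} (hq : ∀ k, Commute (q.coeff k) x) :
    (p * q).eval x = p.eval x * q.eval x :=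
  eval₂_mul_noncomm (RingHom.id R) x hq

lemma degree_opRingEquiv (p : R[X]ᵐᵒᵖ) : (opRingEquiv R p).degree = p.unop.degree := by
  rw [degree, support_opRingEquiv, degree]

end Semiring

variable {R ι κ : Type*} [Ring R]

-- Mathlib's `f /ₘ g` puts the quotient to the right of `g`; passing to `Rᵐᵒᵖ` swaps the two sides.
lemma exists_eq_mul_add_of_monic [Nontrivial R] {g : R[X]} (hg : g.Monic) (f : R[X]) :
    ∃ q r : R[X], f = q * g + r ∧ r.degree < g.degree := by
  let e := opRingEquiv R
  have hg' : (e (.op g)).Monic := by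
    rw [Monic, leadingCoeff_opRingEquiv, MulOpposite.unop_op, hg.leadingCoeff, MulOpposite.op_one]
  refine ⟨(e.symm (e (.op f) /ₘ e (.op g))).unop, (e.symm (e (.op f) %ₘ e (.op g))).unop, ?_, ?_⟩
  · have := congrArg e.symm (modByMonic_add_div (e (.op f)) (e (.op g)))
    rw [map_add, map_mul, e.symm_apply_apply, e.symm_apply_apply] at this
    rw [add_comm]
    exact (congrArg MulOpposite.unop this).symm
  · rw [← degree_opRingEquiv, RingEquiv.apply_symm_apply]
    exact (degree_modByMonic_lt _ hg').trans_eq (degree_opRingEquiv _)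

lemma exists_eq_mul_X_sub_C_of_eval_eq_zero {p : R[X]} {u : R} (hp : p.eval u = 0) :
    ∃ q : R[X], p = q * (X - C u) := by
  nontriviality R
  obtain ⟨q, r, rfl, hr⟩ := exists_eq_mul_add_of_monic (monic_X_sub_C u) p
  have hrC := eq_C_of_degree_le_zero
    (Nat.WithBot.lt_one_iff_le_zero.mp (hr.trans_eq (degree_X_sub_C u)))
  rw [eval_add, eval_mul_X_sub_C, zero_add, hrC, eval_C] at hp
  exact ⟨q, by rw [hrC, hp, C_0, add_zero]⟩

/-- The nodes `x i`, `i ∈ S`, are unisolvent if a polynomial with fewer than `#S` (left)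
coefficients is determined by its values at them. `Polynomial.eval` puts coefficients to the left
of powers, so over a noncommutative ring this is a notion of right evaluation. -/
def Unisolvent (x : ι → R) (S : Finset ι) : Prop :=
  ∀ W : R[X], W.degree < S.card → (∀ i ∈ S, W.eval (x i) = 0) → W = 0

/-- `G` is a nodal polynomial of the nodes `x i`, `i ∈ S`: the analogue of `∏ i ∈ S, (X - C (x i))`,
which over a noncommutative ring need not vanish at the nodes. -/
structure IsNodal (x : ι → R) (S : Finset ι) (G : R[X]) : Prop where
  monic : G.Monic
  degree_eq : G.degree = S.card
  eval_eq_zero : ∀ i ∈ S, G.eval (x i) = 0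

namespace Unisolvent

variable {x : ι → R} {S T : Finset ι}

lemma exists_eval_eq [IsArtinianRing R] (hS : Unisolvent x S) (Y : ι → R) :
    ∃ W : R[X], W.degree < S.card ∧ ∀ i ∈ S, W.eval (x i) = Y i := by
  let toPoly : (Fin S.card → R) →ₗ[R] R[X] :=
    (degreeLT R S.card).subtype ∘ₗ (degreeLTEquiv R S.card).symm.toLinearMap
  have degree_toPoly (v) : (toPoly v).degree < S.card :=
    mem_degreeLT.mp ((degreeLTEquiv R S.card).symm v).2
  let evalMap : (Fin S.card → R) →ₗ[R] (Fin S.card → R) :=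
    LinearMap.pi fun k => leval (x (S.equivFin.symm k)) ∘ₗ toPoly
  have evalMap_injective : Function.Injective evalMap := by
    refine (injective_iff_map_eq_zero evalMap).mpr fun v hv => ?_
    have : toPoly v = 0 := hS _ (degree_toPoly v) fun i hi => by
      simpa [evalMap] using congrFun hv (S.equivFin ⟨i, hi⟩)
    simpa [toPoly] using this
  obtain ⟨v, hv⟩ := (IsArtinian.bijective_of_injective_endomorphism evalMap evalMap_injective).2
    fun k => Y (S.equivFin.symm k)
  refine ⟨toPoly v, degree_toPoly v, fun i hi => ?_⟩
  simpa [evalMap] using congrFun hv (S.equivFin ⟨i, hi⟩)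

lemma exists_isNodal [Nontrivial R] [IsArtinianRing R] (hS : Unisolvent x S) :
    ∃ G, IsNodal x S G := by
  obtain ⟨W, hWdeg, hW⟩ := hS.exists_eval_eq fun i => -x i ^ S.card
  refine ⟨X ^ S.card + W, monic_X_pow_add hWdeg, ?_, fun i hi => ?_⟩
  · rw [degree_add_eq_left_of_degree_lt (by rwa [degree_X_pow]), degree_X_pow]
  · rw [eval_add, hW i hi, X_pow_eq_monomial, eval_monomial, one_mul, add_neg_cancel]

lemma commute_coeff_of_isNodal (hS : Unisolvent x S) {G : R[X]} (hG : IsNodal x S G) {u : R}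
    (hu : ∀ i ∈ S, Commute u (x i)) (k : ℕ) : Commute (G.coeff k) u := by
  cases subsingleton_or_nontrivial R
  · exact Subsingleton.elim _ _
  have commutator_eq_zero : C u * G - G * C u = 0 := by
    refine hS _ ?_ fun i hi => ?_
    · have hle : (C u * G - G * C u).degree ≤ S.card := by
        refine hG.degree_eq ▸ (degree_sub_le _ _).trans (max_le ?_ ?_)
        · exact (degree_mul_le _ _).trans (add_le_of_nonpos_left degree_C_le)
        · exact (degree_mul_le _ _).trans (add_le_of_nonpos_right degree_C_le)
      refine lt_of_le_of_ne hle fun h => ?_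
      refine coeff_ne_zero_of_eq_degree h ?_
      have hl : G.coeff S.card = 1 := by
        rw [← hG.monic.coeff_natDegree, natDegree_eq_of_degree_eq_some hG.degree_eq]
      rw [coeff_sub, coeff_C_mul, coeff_mul_C, hl, mul_one, one_mul, sub_self]
    · rw [eval_sub, eval_C_mul, eval_mul_C_of_commute (hu i hi), hG.eval_eq_zero i hi, mul_zero,
        zero_mul, sub_zero]
  have := congrArg (coeff · k) commutator_eq_zero
  simp only [coeff_sub, coeff_C_mul, coeff_mul_C, coeff_zero] at this
  exact (sub_eq_zero.mp this).symm

lemma isRightRegular_eval_of_isNodal (hS : Unisolvent x S) {G : R[X]} (hG : IsNodal x S G) {u : R}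
    (hu : ∀ i ∈ S, Commute u (x i)) (hreg : ∀ i ∈ S, IsRightRegular (x i - u)) :
    IsRightRegular (G.eval u) := by
  refine isRightRegular_iff_left_eq_zero_of_mul.mpr fun c hc => ?_
  nontriviality R
  obtain ⟨q, hq⟩ := exists_eq_mul_X_sub_C_of_eval_eq_zero (p := C c * G) (u := u)
    (by rw [eval_C_mul, hc])
  have hq0 : q = 0 := by
    refine hS q ?_ fun i hi => ?_
    · by_contra! h
      have hle : (C c * G).degree ≤ S.card :=
        hG.degree_eq ▸ (degree_mul_le _ _).trans (add_le_of_nonpos_left degree_C_le)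
      rw [hq, (monic_X_sub_C u).degree_mul, degree_X_sub_C] at hle
      exact absurd ((add_le_add_left h 1).trans hle) (by norm_cast; lia)
    · have heval := congrArg (eval (x i)) hq
      rw [eval_C_mul, hG.eval_eq_zero i hi, mul_zero, mul_sub, eval_sub, eval_mul_X,
        eval_mul_C_of_commute (hu i hi), ← mul_sub] at heval
      exact (hreg i hi).mul_right_eq_zero_iff.mp heval.symm
  rw [hq0, zero_mul, hG.monic.mul_left_eq_zero_iff, C_eq_zero] at hq
  exact hq

lemma union [IsArtinianRing R] [DecidableEq ι] (hS : Unisolvent x S) (hT : Unisolvent x T)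
    (hcomm : ∀ i ∈ S, ∀ j ∈ T, Commute (x i) (x j))
    (hreg : ∀ i ∈ S, ∀ j ∈ T, IsRightRegular (x i - x j)) : Unisolvent x (S ∪ T) := by
  intro W hWdeg hW
  nontriviality R
  have hdisj : Disjoint S T := Finset.disjoint_left.mpr fun i hi hi' =>
    not_isRightRegular_zero (sub_self (x i) ▸ hreg i hi i hi')
  obtain ⟨G, hG⟩ := hS.exists_isNodal
  obtain ⟨q, r, rfl, hr⟩ := exists_eq_mul_add_of_monic hG.monic W
  have hr0 : r = 0 := hS r (hG.degree_eq ▸ hr) fun i hi => by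
    simpa [eval_mul_eq_zero_of_eval_right q (hG.eval_eq_zero i hi)] using
      hW i (Finset.mem_union_left T hi)
  subst hr0
  rw [add_zero] at hW hWdeg ⊢
  have hq0 : q = 0 := by
    refine hT q ?_ fun j hj => ?_
    · rw [hG.monic.degree_mul, hG.degree_eq, Finset.card_union_of_disjoint hdisj, add_comm,
        Nat.cast_add] at hWdeg
      exact lt_of_add_lt_add_left hWdeg
    · have hjcomm : ∀ i ∈ S, Commute (x j) (x i) := fun i hi => (hcomm i hi j hj).symm
      have heval := hW j (Finset.mem_union_right S hj)
      rw [eval_mul_of_commute_coeff q (hS.commute_coeff_of_isNodal hG hjcomm)] at heval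
      have hGreg := hS.isRightRegular_eval_of_isNodal hG hjcomm fun i hi => hreg i hi j hj
      exact hGreg.mul_right_eq_zero_iff.mp heval
  rw [hq0, zero_mul]

lemma biUnion [IsArtinianRing R] [DecidableEq ι] {K : Finset κ} {S : κ → Finset ι}
    (hS : ∀ k ∈ K, Unisolvent x (S k))
    (hcomm : (K : Set κ).Pairwise fun k l => ∀ i ∈ S k, ∀ j ∈ S l, Commute (x i) (x j))
    (hreg : (K : Set κ).Pairwise fun k l => ∀ i ∈ S k, ∀ j ∈ S l, IsRightRegular (x i - x j)) :
    Unisolvent x (K.biUnion S) := by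
  classical
  induction K using Finset.induction_on with
  | empty => exact fun W hWdeg _ => by simpa using hWdeg
  | insert k K hk ih =>
    rw [Finset.forall_mem_insert] at hS
    have hne {l} (hl : l ∈ K) : k ≠ l := fun h => hk (h ▸ hl)
    rw [Finset.coe_insert] at hcomm hreg
    have hK := ih hS.2 (hcomm.mono (Set.subset_insert _ _)) (hreg.mono (Set.subset_insert _ _))
    have of_mem_biUnion {p : ι → ι → Prop}
        (hp : (insert k (K : Set κ)).Pairwise fun k l => ∀ i ∈ S k, ∀ j ∈ S l, p i j) :
        ∀ i ∈ S k, ∀ j ∈ K.biUnion S, p i j := fun i hi j hj => by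
      obtain ⟨l, hl, hjl⟩ := Finset.mem_biUnion.mp hj
      exact hp (Set.mem_insert _ _) (Set.mem_insert_of_mem _ hl) (hne hl) i hi j hjl
    rw [Finset.biUnion_insert]
    exact hS.1.union hK (of_mem_biUnion hcomm) (of_mem_biUnion hreg)

end Unisolvent

end Unisolvence

section CoordinateEmbedding

open scoped Kronecker

variable {α β K : Type*} [CommRing K] [Fintype α] [DecidableEq α] [Fintype β] [DecidableEq β]

/-- The embedding of `β × β` matrices as operators on coordinate `a` of `α → β`, that is, the
Kronecker product of `A` with the identity on the remaining coordinates. -/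
def coordHom (a : α) : Matrix β β K →+* Matrix (α → β) (α → β) K where
  toFun A := (A ⊗ₖ (1 : Matrix ({u // u ≠ a} → β) ({u // u ≠ a} → β) K)).submatrix
    (Equiv.funSplitAt a β) (Equiv.funSplitAt a β)
  map_one' := by rw [one_kronecker_one, submatrix_one_equiv]
  map_mul' A B := by rw [submatrix_mul_equiv, ← mul_kronecker_mul, one_mul]
  map_zero' := by rw [zero_kronecker, submatrix_zero]; rfl
  map_add' A B := by rw [add_kronecker, submatrix_add]; rfl

lemma coordHom_apply (a : α) (A : Matrix β β K) (i j : α → β) :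
    coordHom a A i j = if ∀ u, u ≠ a → i u = j u then A (i a) (j a) else 0 := by
  simp [coordHom, one_apply, funext_iff]

lemma coordHom_diagonal (a : α) (f : β → K) :
    coordHom a (diagonal f) = diagonal fun i : α → β => f (i a) := by
  ext i j
  simp only [coordHom_apply, diagonal_apply]
  by_cases h : i = j
  · simp [h]
  · rw [if_neg h]
    by_cases ha : i a = j a
    · rw [if_neg fun h' => h (funext fun u => ?_)]
      by_cases hu : u = a
      · rwa [hu]
      · exact h' u hu
    · simp [ha]

lemma coordHom_mul_coordHom_apply {a a' : α} (h : a ≠ a') (A A' : Matrix β β K) (i j : α → β) :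
    (coordHom a A * coordHom a' A') i j =
      if ∀ u, u ≠ a → u ≠ a' → i u = j u then A (i a) (j a) * A' (i a') (j a') else 0 := by
  rw [mul_apply, Finset.sum_eq_single (Function.update i a (j a))]
  · have hiff : (∀ u, u ≠ a' → Function.update i a (j a) u = j u) ↔
        ∀ u, u ≠ a → u ≠ a' → i u = j u := by
      refine forall_congr' fun u => ?_
      by_cases hu : u = a <;> simp [hu]
    simp +contextual only [coordHom_apply, hiff, Function.update_self, Function.update_of_ne h.symm,
      Function.update_of_ne, ne_eq, not_false_eq_true, implies_true, if_true, mul_ite, mul_zero]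
  · intro k _ hk
    rw [coordHom_apply, coordHom_apply, ite_zero_mul_ite_zero, if_neg]
    rintro ⟨hik, hkj⟩
    refine hk (funext fun u => ?_)
    by_cases hu : u = a
    · rw [hu, Function.update_self, hkj a h]
    · rw [Function.update_of_ne hu, hik u hu]
  · simp

lemma commute_coordHom {a a' : α} (h : a ≠ a') (A A' : Matrix β β K) :
    Commute (coordHom a A) (coordHom a' A') := by
  ext i j
  simp only [coordHom_mul_coordHom_apply h, coordHom_mul_coordHom_apply h.symm, mul_comm (A _ _)]
  refine if_congr ?_ rfl rfl
  exact forall_congr' fun u => forall_comm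

lemma isUnit_coordHom_conj_diagonal_sub {a a' : α} (h : a ≠ a') {P P' : Matrix β β K}
    (hP : IsUnit P) (hP' : IsUnit P') {f f' : β → K} (hf : ∀ y y', IsUnit (f y - f' y')) :
    IsUnit (coordHom a (P * diagonal f * P⁻¹) - coordHom a' (P' * diagonal f' * P'⁻¹)) := by
  have hdiag : IsUnit (coordHom a (diagonal f) - coordHom a' (diagonal f')) := by
    rw [coordHom_diagonal, coordHom_diagonal, diagonal_sub, isUnit_diagonal, Pi.isUnit_iff]
    exact fun j => hf _ _
  have hPdet := (isUnit_iff_isUnit_det P).mp hP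
  have hPdet' := (isUnit_iff_isUnit_det P').mp hP'
  have hinv : coordHom a P * coordHom a P⁻¹ = 1 := by
    rw [← map_mul, mul_nonsing_inv P hPdet, map_one]
  have hinv' : coordHom a' P' * coordHom a' P'⁻¹ = 1 := by
    rw [← map_mul, mul_nonsing_inv P' hPdet', map_one]
  -- the two changes of basis act on different coordinates: they diagonalise both terms at once
  have hconj : coordHom a (P * diagonal f * P⁻¹) - coordHom a' (P' * diagonal f' * P'⁻¹) =
      coordHom a P * (coordHom a' P' * (coordHom a (diagonal f) - coordHom a' (diagonal f')) *
        coordHom a' P'⁻¹) * coordHom a P⁻¹ := by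
    have h₁ : coordHom a' P' * coordHom a (diagonal f) * coordHom a' P'⁻¹ =
        coordHom a (diagonal f) := by
      rw [(commute_coordHom h.symm _ _).eq, mul_assoc, hinv', mul_one]
    have h₂ : coordHom a P * coordHom a' (P' * diagonal f' * P'⁻¹) * coordHom a P⁻¹ =
        coordHom a' (P' * diagonal f' * P'⁻¹) := by
      rw [(commute_coordHom h _ _).eq, mul_assoc, hinv, mul_one]
    rw [mul_sub, sub_mul, h₁, ← map_mul, ← map_mul, mul_sub, sub_mul, h₂, map_mul, map_mul]
  rw [hconj]
  have hPinv := isUnit_nonsing_inv_iff.mpr hP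
  have hPinv' := isUnit_nonsing_inv_iff.mpr hP'
  exact ((hP.map _).mul (((hP'.map _).mul hdiag).mul (hPinv'.map _))).mul (hPinv.map _)

end CoordinateEmbedding

section BlockVandermonde

open Polynomial

variable {K I ι : Type*} [Fintype I] [DecidableEq I]

/-- The block Vandermonde matrix with nodes `x p`: its block in row `z` and column `p` is
`x p ^ z * P p`. -/
def blockVandermonde [Semiring K] (x P : ι → Matrix I I K) (t : ℕ) : Matrix (I × Fin t) (ι × I) K :=
  of fun r c => (x c.1 ^ (r.2 : ℕ) * P c.1) r.1 c.2

lemma vecMul_blockVandermonde [Semiring K] (x P : ι → Matrix I I K) {t : ℕ} {W : (Matrix I I K)[X]}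
    (hW : W.degree < t) (i : I) :
    (fun r : I × Fin t => W.coeff r.2 i r.1) ᵥ* blockVandermonde x P t =
      fun c => (W.eval (x c.1) * P c.1) i c.2 := by
  ext ⟨p, j⟩
  have heval : W.eval (x p) = ∑ z : Fin t, W.coeff z * x p ^ (z : ℕ) := by
    rw [eval_eq_sum, ← sum_fin (fun k c => c * x p ^ k) (fun k => zero_mul _) hW]
  simp only [heval, vecMul, dotProduct, blockVandermonde, of_apply, Finset.sum_mul,
    Matrix.sum_apply, Fintype.sum_prod_type_right, Matrix.mul_assoc,
    Matrix.mul_apply (M := W.coeff _)]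

lemma unisolvent_iff_forall_vecMul_eq_zero [Ring K] {x P : ι → Matrix I I K} {S : Finset ι}
    (hP : ∀ p ∈ S, IsUnit (P p)) : Unisolvent x S ↔
    ∀ w : I × Fin S.card → K,
      (∀ c, c.1 ∈ S → (w ᵥ* blockVandermonde x P S.card) c = 0) → w = 0 := by
  classical
  constructor
  · intro hS w hw
    let W : (Matrix I I K)[X] := ofFn S.card fun z => of fun _ i => w (i, z)
    have hWdeg : W.degree < S.card := ofFn_degree_lt _
    have hcoeff (i : I) : (fun r : I × Fin S.card => W.coeff r.2 i r.1) = w := by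
      ext ⟨k, z⟩
      simp [W, ofFn_coeff_eq_val_of_lt _ z.2]
    have hW : W = 0 := by
      refine hS W hWdeg fun p hp => (hP p hp).mul_left_eq_zero.mp ?_
      ext i j
      rw [← congrFun (vecMul_blockVandermonde x P hWdeg i) (p, j), hcoeff, hw (p, j) hp,
        Matrix.zero_apply]
    ext ⟨i, z⟩
    calc w (i, z) = W.coeff z i i := (congrFun (hcoeff i) (i, z)).symm
      _ = 0 := by rw [hW, coeff_zero, Matrix.zero_apply]
  · intro h W hWdeg hW
    have hrow (i : I) : (fun r : I × Fin S.card => W.coeff r.2 i r.1) = 0 := by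
      refine h _ fun c hc => ?_
      refine (congrFun (vecMul_blockVandermonde x P hWdeg i) c).trans ?_
      rw [hW c.1 hc, zero_mul, Matrix.zero_apply]
    ext k i j
    by_cases hk : k < S.card
    · exact congrFun (hrow i) (j, ⟨k, hk⟩)
    · rw [coeff_eq_zero_of_degree_lt (hWdeg.trans_le (by exact_mod_cast not_lt.mp hk)), coeff_zero]

theorem det_submatrix_blockVandermonde_ne_zero_iff [CommRing K] [IsDomain K] {N : Type*}
    [Fintype N] [DecidableEq N] {x P : ι → Matrix I I K} {S : Finset ι} {t : ℕ} (hS : S.card = t)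
    (hP : ∀ p ∈ S, IsUnit (P p)) (row : N ≃ I × Fin t) {col : N → ι × I}
    (hcol : ∀ c, c ∈ Set.range col ↔ c.1 ∈ S) :
    ((blockVandermonde x P t).submatrix row col).det ≠ 0 ↔ Unisolvent x S := by
  subst hS
  rw [unisolvent_iff_forall_vecMul_eq_zero hP, Ne, ← exists_vecMul_eq_zero_iff]
  push Not
  simp only [submatrix_vecMul_equiv, funext_iff (g := (0 : N → K)), Function.comp_apply,
    ← hcol, Set.forall_mem_range, Pi.zero_apply, not_imp_not]
  have eq_zero_iff (v : N → K) : v ∘ row.symm = 0 ↔ ∀ ρ, v ρ = 0 := by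
    simp only [funext_iff, Function.comp_apply, Pi.zero_apply, row.symm.forall_congr_left,
      Equiv.symm_symm, row.symm_apply_apply]
  refine (row.arrowCongr (.refl K)).forall_congr fun {v} => ?_
  exact imp_congr Iff.rfl (eq_zero_iff v).symm

end BlockVandermonde

section KernelMatrix

variable (K : Type*) [CommRing K] (s : ℕ)

/-- The `s × s` matrix `K_b` of signs underlying the kernel matrices `K_{a,b}^{(t)}`: ones on the
diagonal, `-1` elsewhere in row `b`, and zeros otherwise. For `b ≥ s` there is no such row and
`K_b = 1`. -/
def kernelMatrix (b : ℕ) : Matrix (Fin s) (Fin s) K :=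
  1 - of fun (i j : Fin s) => if (i : ℕ) = b ∧ (j : ℕ) ≠ b then 1 else 0

lemma isUnit_kernelMatrix (b : ℕ) : IsUnit (kernelMatrix K s b) := by
  refine IsNilpotent.isUnit_one_sub ⟨2, ?_⟩
  ext i j
  rw [pow_two, mul_apply, Matrix.zero_apply]
  refine Finset.sum_eq_zero fun y _ => ?_
  rw [of_apply, of_apply, ite_zero_mul_ite_zero, if_neg fun h => h.1.2 h.2.1]

variable {K s}

lemma kernelMatrix_mul_diagonal_apply (b : ℕ) (f : Fin s → K) (i j : Fin s) :
    (kernelMatrix K s b * diagonal f) i j =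
      if i = j then f j else if (i : ℕ) = b ∧ (j : ℕ) ≠ b then -f j else 0 := by
  rw [mul_diagonal, kernelMatrix, Matrix.sub_apply, of_apply, one_apply]
  by_cases hij : i = j
  · subst hij
    simp
  · by_cases hb : (i : ℕ) = b ∧ (j : ℕ) ≠ b <;> simp [hij, hb]

lemma kernelMatrix_conj_diagonal_pow_mul (b : ℕ) (f : Fin s → K) (z : ℕ) :
    (kernelMatrix K s b * diagonal f * (kernelMatrix K s b)⁻¹) ^ z * kernelMatrix K s b =
      kernelMatrix K s b * diagonal (f ^ z) := by
  have hdet := (isUnit_iff_isUnit_det _).mp (isUnit_kernelMatrix K s b)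
  have hsemi : SemiconjBy (kernelMatrix K s b) (diagonal f)
      (kernelMatrix K s b * diagonal f * (kernelMatrix K s b)⁻¹) := by
    rw [SemiconjBy, Matrix.mul_assoc _ _ (kernelMatrix K s b), nonsing_inv_mul _ hdet,
      Matrix.mul_one]
  rw [← (hsemi.pow_right z).eq, diagonal_pow]

end KernelMatrix

section Nodes

variable {F : Type*} [Field F] (lam : ℕ → F) (s g m : ℕ) [NeZero m]

variable (F) in
/-- The invertible matrix `A_{a,b}^{(1)}` with all `λ_i` replaced by `1`, for `p = (a, b)`. Rows and
columns are indexed by base-`s` digit strings of length `m`. -/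
def frame (p : ℕ × ℕ) : Matrix (Fin m → Fin s) (Fin m → Fin s) F :=
  coordHom (Fin.ofNat m p.1) (kernelMatrix F s p.2)

/-- The matrix `X`, diagonalised by `frame F s m p`, such that row `z` of the block column
`A_{a,b}^{(t)}`, `p = (a, b)`, is `X ^ z * frame F s m p`. -/
noncomputable def node (p : ℕ × ℕ) : Matrix (Fin m → Fin s) (Fin m → Fin s) F :=
  coordHom (Fin.ofNat m p.1)
    (kernelMatrix F s p.2 * diagonal (fun y : Fin s => lam (p.1 * s * g + p.2 * s + y)) *
      (kernelMatrix F s p.2)⁻¹)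

lemma isUnit_frame (p : ℕ × ℕ) : IsUnit (frame F s m p) :=
  (isUnit_kernelMatrix F s p.2).map _

lemma node_pow_mul_frame (p : ℕ × ℕ) (z : ℕ) :
    node lam s g m p ^ z * frame F s m p = coordHom (Fin.ofNat m p.1) (kernelMatrix F s p.2 *
      diagonal (fun y : Fin s => lam (p.1 * s * g + p.2 * s + y) ^ z)) := by
  rw [node, frame, ← map_pow, ← map_mul, kernelMatrix_conj_diagonal_pow_mul]
  rfl

end Nodes

section Digits

variable {s m : ℕ}

lemma digit_eq_finFunctionFinEquiv_symm (i : Fin (s ^ m)) (u : Fin m) :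
    digit s i u = (finFunctionFinEquiv.symm i u : Fin s) :=
  (finFunctionFinEquiv_symm_apply_val i u).symm

lemma digit_eq_zero {i u : ℕ} (hs : 0 < s) (hi : i < s ^ m) (hu : m ≤ u) : digit s i u = 0 := by
  rw [digit, Nat.div_eq_of_lt (hi.trans_le (Nat.pow_le_pow_right hs hu)), Nat.zero_mod]

lemma forall_ne_digit_eq_iff (a : Fin m) (i j : Fin (s ^ m)) :
    (∀ u : ℕ, u ≠ a → digit s i u = digit s j u) ↔
      ∀ u, u ≠ a → finFunctionFinEquiv.symm i u = finFunctionFinEquiv.symm j u := by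
  refine ⟨fun h u hu => Fin.ext ?_, fun h u hu => ?_⟩
  · rw [← digit_eq_finFunctionFinEquiv_symm, ← digit_eq_finFunctionFinEquiv_symm]
    exact h u (Fin.val_ne_of_ne hu)
  · obtain hum | hum := lt_or_ge u m
    · lift u to Fin m using hum
      rw [digit_eq_finFunctionFinEquiv_symm, digit_eq_finFunctionFinEquiv_symm,
        h u (Fin.val_ne_iff.mp hu)]
    · have hs : 0 < s := (finFunctionFinEquiv.symm i a).pos
      rw [digit_eq_zero hs i.2 hum, digit_eq_zero hs j.2 hum]

lemma Aent_eq_node_pow_mul_frame {F : Type*} [Field F] (lam : ℕ → F) (g : ℕ) [NeZero m]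
    (a : Fin m) (b z : ℕ) (i j : Fin (s ^ m)) :
    Aent lam s g a b i j z = (node lam s g m (a, b) ^ z * frame F s m (a, b))
      (finFunctionFinEquiv.symm i) (finFunctionFinEquiv.symm j) := by
  have eq_iff : (i : ℕ) = j ↔
      (∀ u, u ≠ a → finFunctionFinEquiv.symm i u = finFunctionFinEquiv.symm j u) ∧
        finFunctionFinEquiv.symm i a = finFunctionFinEquiv.symm j a := by
    rw [← Fin.ext_iff, ← finFunctionFinEquiv.symm.apply_eq_iff_eq (x := i), funext_iff,
      ← and_forall_ne a, and_comm]
  rw [node_pow_mul_frame, Fin.ofNat_val_eq_self, coordHom_apply,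
    kernelMatrix_mul_diagonal_apply, Aent]
  simp only [forall_ne_digit_eq_iff, digit_eq_finFunctionFinEquiv_symm, eq_iff]
  split_ifs <;> first | rfl | tauto

end Digits

section Concatenation

lemma enum_mem {B : Finset ℕ} {q : ℕ} (hq : q < B.card) : enum B q ∈ B := by
  have hlen : q < (B.sort (· ≤ ·)).length := by rwa [Finset.length_sort]
  rw [enum, List.getD_eq_getElem _ _ hlen, ← Finset.mem_sort (· ≤ ·)]
  exact List.getElem_mem hlen

lemma exists_enum_eq {B : Finset ℕ} {b : ℕ} (hb : b ∈ B) : ∃ q < B.card, enum B q = b := by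
  obtain ⟨q, hq, rfl⟩ := List.getElem_of_mem ((Finset.mem_sort (· ≤ ·)).mpr hb)
  exact ⟨q, by rwa [Finset.length_sort] at hq, by rw [enum, List.getD_eq_getElem _ _ hq]⟩

lemma loc_lt (c : ℕ) (sz : ℕ → ℕ) {κ : ℕ} (hκ : κ < ∑ i ∈ Finset.range c, sz i) :
    (loc c sz κ).1 < c ∧ (loc c sz κ).2 < sz (loc c sz κ).1 := by
  induction c generalizing sz κ with
  | zero => simp at hκ
  | succ c ih =>
    rw [loc]
    split_ifs with h
    · exact ⟨c.succ_pos, h⟩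
    · rw [Finset.sum_range_succ'] at hκ
      have hlt := ih (fun i => sz (i + 1)) (κ := κ - sz 0) (by lia)
      exact ⟨Nat.succ_lt_succ hlt.1, hlt.2⟩

lemma exists_loc_eq (c : ℕ) (sz : ℕ → ℕ) {i o : ℕ} (hi : i < c) (ho : o < sz i) :
    ∃ κ < ∑ i ∈ Finset.range c, sz i, loc c sz κ = (i, o) := by
  induction c generalizing sz i with
  | zero => exact absurd hi i.not_lt_zero
  | succ c ih =>
    rw [Finset.sum_range_succ']
    cases i with
    | zero => exact ⟨o, Nat.lt_add_left _ ho, by rw [loc, if_pos ho]⟩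
    | succ i =>
      obtain ⟨κ, hκ, hloc⟩ := ih (fun i => sz (i + 1)) (Nat.lt_of_succ_lt_succ hi) ho
      exact ⟨κ + sz 0, Nat.add_lt_add_right hκ _, by simp [loc, hloc]⟩

lemma AmatB_eq_MultiCat {F : Type*} [Field F] (lam : ℕ → F) (s g ℓ a : ℕ) (B : Finset ℕ) :
    AmatB lam s g ℓ a B.card B = MultiCat lam s g ℓ B.card 1 (fun _ => a) fun _ => B := by
  ext ρ κ
  simp only [AmatB, MultiCat, loc, of_apply, if_pos κ.2]

/-- The indices `(a_i, b)`, `b ∈ B_i`, `i < c`, of the blocks `A_{a_i,b}^{(t)}` concatenated in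
`MultiCat`. -/
def blockIndices (c : ℕ) (a : ℕ → ℕ) (B : ℕ → Finset ℕ) : Finset (ℕ × ℕ) :=
  (Finset.range c).biUnion fun i => {a i} ×ˢ B i

variable {s m c t : ℕ} {a : ℕ → ℕ} {B : ℕ → Finset ℕ}

lemma card_blockIndices (hainj : Set.InjOn a (Set.Iio c)) :
    (blockIndices c a B).card = ∑ i ∈ Finset.range c, (B i).card := by
  rw [blockIndices, Finset.card_biUnion]
  · simp only [Finset.card_product, Finset.card_singleton, one_mul]
  · intro i hi j hj hij
    refine Finset.disjoint_product.mpr (.inl ?_)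
    exact Finset.disjoint_singleton.mpr fun h =>
      hij (hainj (Finset.mem_range.mp hi) (Finset.mem_range.mp hj) h)

/-- The block and the inner index, as a digit string, of a column of `MultiCat`. -/
def blockColumn (s m c : ℕ) [NeZero s] (a : ℕ → ℕ) (B : ℕ → Finset ℕ) (κ : ℕ) :
    (ℕ × ℕ) × (Fin m → Fin s) :=
  let p := loc c (fun i => s ^ m * (B i).card) κ
  ((a p.1, enum (B p.1) (p.2 / s ^ m)), finFunctionFinEquiv.symm (Fin.ofNat (s ^ m) p.2))

lemma mem_range_blockColumn_iff [NeZero s] (hsum : ∑ i ∈ Finset.range c, (B i).card = t)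
    (x : (ℕ × ℕ) × (Fin m → Fin s)) :
    x ∈ Set.range (fun κ : Fin (s ^ m * t) => blockColumn s m c a B κ) ↔
      x.1 ∈ blockIndices c a B := by
  have hsum' : ∑ i ∈ Finset.range c, s ^ m * (B i).card = s ^ m * t := by
    rw [← Finset.mul_sum, hsum]
  simp only [blockIndices, Finset.mem_biUnion, Finset.mem_range, Finset.mem_product,
    Finset.mem_singleton]
  constructor
  · rintro ⟨κ, rfl⟩
    obtain ⟨hi, ho⟩ := loc_lt c (fun i => s ^ m * (B i).card) (κ.2.trans_eq hsum'.symm)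
    exact ⟨_, hi, rfl, enum_mem (Nat.div_lt_of_lt_mul ho)⟩
  · obtain ⟨⟨_, b⟩, j⟩ := x
    rintro ⟨i, hi, rfl, hb⟩
    obtain ⟨q, hq, rfl⟩ := exists_enum_eq hb
    have hj := (finFunctionFinEquiv j).2
    have ho : s ^ m * q + finFunctionFinEquiv j < s ^ m * (B i).card :=
      calc _ < s ^ m * q + s ^ m := Nat.add_lt_add_left hj _
        _ = s ^ m * (q + 1) := (Nat.mul_succ _ _).symm
        _ ≤ s ^ m * (B i).card := Nat.mul_le_mul_left _ hq
    obtain ⟨κ, hκ, hloc⟩ := exists_loc_eq c (fun i => s ^ m * (B i).card) hi ho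
    have hdiv : (s ^ m * q + finFunctionFinEquiv j) / s ^ m = q := by
      rw [Nat.mul_add_div (NeZero.pos _), Nat.div_eq_of_lt hj, add_zero]
    have hmod : Fin.ofNat (s ^ m) (s ^ m * q + finFunctionFinEquiv j) = finFunctionFinEquiv j :=
      Fin.ext (by rw [Fin.val_ofNat, Nat.mul_add_mod, Nat.mod_eq_of_lt hj])
    refine ⟨⟨κ, hκ.trans_eq hsum'⟩, ?_⟩
    simp only [blockColumn, hloc, hdiv, hmod, Equiv.symm_apply_apply]

variable {F : Type*} [Field F] (lam : ℕ → F) (g : ℕ) [NeZero s] [NeZero m]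

lemma MultiCat_eq_submatrix_blockVandermonde (ha : ∀ i < c, a i < m)
    (hsum : ∑ i ∈ Finset.range c, (B i).card = t) :
    MultiCat lam s g (s ^ m) t c a B =
      (blockVandermonde (node lam s g m) (frame F s m) t).submatrix
        (finProdFinEquiv.symm.trans (finFunctionFinEquiv.symm.prodCongr (.refl (Fin t))))
        fun κ : Fin (s ^ m * t) => blockColumn s m c a B κ := by
  ext ρ κ
  have hκ : (κ : ℕ) < ∑ i ∈ Finset.range c, s ^ m * (B i).card := by
    rw [← Finset.mul_sum, hsum]; exact κ.2
  have hi := (loc_lt c (fun i => s ^ m * (B i).card) hκ).1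
  exact Aent_eq_node_pow_mul_frame lam g ⟨_, ha _ hi⟩ _ _ ρ.divNat (Fin.ofNat (s ^ m) _)

theorem det_MultiCat_ne_zero_iff_unisolvent (ha : ∀ i < c, a i < m)
    (hainj : Set.InjOn a (Set.Iio c)) (hsum : ∑ i ∈ Finset.range c, (B i).card = t) :
    (MultiCat lam s g (s ^ m) t c a B).det ≠ 0 ↔
      Unisolvent (node lam s g m) (blockIndices c a B) := by
  rw [MultiCat_eq_submatrix_blockVandermonde lam g ha hsum]
  exact det_submatrix_blockVandermonde_ne_zero_iff (x := node lam s g m) (P := frame F s m)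
    ((card_blockIndices hainj).trans hsum) (fun p _ => isUnit_frame s m p) _
    (mem_range_blockColumn_iff hsum)

lemma LocalConstraints.unisolvent_node {lam : ℕ → F} {g : ℕ}
    (hloc : LocalConstraints lam s g (s ^ m) m) {a : ℕ} (ha : a < m) {B : Finset ℕ}
    (hB : B ⊆ Finset.range g) (hBne : B.Nonempty) :
    Unisolvent (node lam s g m) ({a} ×ˢ B) := by
  have hdet := hloc a ha B hB hBne
  rw [AmatB_eq_MultiCat, det_MultiCat_ne_zero_iff_unisolvent (B := fun _ => B) lam g
    (fun _ _ => ha) (by simp [Set.InjOn]) (Finset.sum_range_one _)] at hdet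
  simpa only [blockIndices, Finset.range_one, Finset.singleton_biUnion] using hdet

end Concatenation

section DistinctGroups

variable {F : Type*} [Field F] (lam : ℕ → F) (s g m : ℕ) [NeZero m] {p q : ℕ × ℕ}

lemma finOfNat_ne_finOfNat {i j : ℕ} (hi : i < m) (hj : j < m) (h : i ≠ j) :
    Fin.ofNat m i ≠ Fin.ofNat m j := fun h' => h <| by
  simpa [Nat.mod_eq_of_lt hi, Nat.mod_eq_of_lt hj] using congrArg Fin.val h'

lemma commute_node (hp : p.1 < m) (hq : q.1 < m) (hpq : p.1 ≠ q.1) :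
    Commute (node lam s g m p) (node lam s g m q) :=
  commute_coordHom (finOfNat_ne_finOfNat m hp hq hpq) _ _

lemma isUnit_node_sub_node (hdist : Set.InjOn lam (Set.Iio (m * s * g)))
    (hp : p.1 < m) (hq : q.1 < m) (hpq : p.1 ≠ q.1) (hpg : p.2 < g) (hqg : q.2 < g) :
    IsUnit (node lam s g m p - node lam s g m q) := by
  have index_eq (a b y : ℕ) : a * s * g + b * s + y = (a * g + b) * s + y := by ring
  have index_div {b : ℕ} (a : ℕ) (hb : b < g) (y : Fin s) :
      (a * s * g + b * s + y) / s / g = a := by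
    rw [index_eq, Nat.mul_comm _ s, Nat.mul_add_div y.pos, Nat.div_eq_of_lt y.2, add_zero,
      Nat.mul_comm, Nat.mul_add_div (b.zero_le.trans_lt hb), Nat.div_eq_of_lt hb, add_zero]
  have index_lt {a b : ℕ} (ha : a < m) (hb : b < g) (y : Fin s) :
      a * s * g + b * s + y < m * s * g := by
    rw [Nat.mul_assoc m]
    refine Nat.lt_mul_of_div_lt ?_ ?_
    · rwa [← Nat.div_div_eq_div_mul, index_div a hb y]
    · exact Nat.mul_pos y.pos (b.zero_le.trans_lt hb)
  refine isUnit_coordHom_conj_diagonal_sub (finOfNat_ne_finOfNat m hp hq hpq)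
    (isUnit_kernelMatrix F s _) (isUnit_kernelMatrix F s _) fun y y' =>
      (sub_ne_zero.mpr fun h => hpq ?_).isUnit
  rw [← index_div p.1 hpg y, hdist (index_lt hp hpg y) (index_lt hq hqg y') h, index_div q.1 hqg y']

end DistinctGroups

theorem statement1_general {F : Type*} [Field F] (s g m : ℕ) [NeZero s] [NeZero m] (lam : ℕ → F)
    (hdist : Set.InjOn lam (Set.Iio (m * s * g))) (hloc : LocalConstraints lam s g (s ^ m) m)
    (c t : ℕ) (a : ℕ → ℕ) (ha : ∀ i < c, a i < m) (hainj : Set.InjOn a (Set.Iio c))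
    (B : ℕ → Finset ℕ) (hBsub : ∀ i < c, B i ⊆ Finset.range g) (hBne : ∀ i < c, (B i).Nonempty)
    (hsum : ∑ i ∈ Finset.range c, (B i).card = t) :
    (MultiCat lam s g (s ^ m) t c a B).det ≠ 0 := by
  rw [det_MultiCat_ne_zero_iff_unisolvent lam g ha hainj hsum]
  have fst_eq {i} {p : ℕ × ℕ} (hp : p ∈ {a i} ×ˢ B i) : p.1 = a i :=
    Finset.mem_singleton.mp (Finset.mem_product.mp hp).1
  have fst_lt {i} (hi : i ∈ Finset.range c) {p : ℕ × ℕ} (hp : p ∈ {a i} ×ˢ B i) : p.1 < m :=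
    (fst_eq hp).trans_lt (ha i (Finset.mem_range.mp hi))
  have snd_lt {i} (hi : i ∈ Finset.range c) {p : ℕ × ℕ} (hp : p ∈ {a i} ×ˢ B i) : p.2 < g :=
    Finset.mem_range.mp (hBsub i (Finset.mem_range.mp hi) (Finset.mem_product.mp hp).2)
  have fst_ne {i} (hi : i ∈ Finset.range c) {j} (hj : j ∈ Finset.range c) (hij : i ≠ j)
      {p q : ℕ × ℕ} (hp : p ∈ {a i} ×ˢ B i) (hq : q ∈ {a j} ×ˢ B j) : p.1 ≠ q.1 := by
    rw [fst_eq hp, fst_eq hq]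
    exact hainj.ne (Finset.mem_range.mp hi) (Finset.mem_range.mp hj) hij
  refine Unisolvent.biUnion (fun i hi => ?_)
    (fun i hi j hj hij p hp q hq => commute_node lam s g m (fst_lt hi hp) (fst_lt hj hq)
      (fst_ne hi hj hij hp hq))
    fun i hi j hj hij p hp q hq => (isUnit_node_sub_node lam s g m hdist (fst_lt hi hp)
      (fst_lt hj hq) (fst_ne hi hj hij hp hq) (snd_lt hi hp) (snd_lt hj hq)).isRegular.right
  have hic := Finset.mem_range.mp hi
  exact hloc.unisolvent_node (ha i hic) (hBsub i hic) (hBne i hic)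

/-- Lemma 2 of the paper: if the `λ_i` are pairwise distinct and satisfy
the local constraints, then for any `c ≥ 1` pairwise distinct group indices
`a_0, …, a_{c−1} ∈ [n/s]` and nonempty subsets `B_0, …, B_{c−1} ⊆ [s]` with
`|B_0| + ⋯ + |B_{c−1}| = t ≤ r = n − k`, the matrix
`[A_{a₀,B₀}^{(t)} | ⋯ | A_{a_{c−1},B_{c−1}}^{(t)}]` has nonzero determinant. -/
theorem statement1 (F : Type*) [Field F] [Fintype F] (n k d s ℓ : ℕ)
    (hk : 1 ≤ k) (hkn : k < n) (hd₁ : k + 1 ≤ d) (hd₂ : d ≤ n - 1)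
    (hs : s = d - k + 1) (hdiv : s ∣ n) (hℓ : ℓ = s ^ (n / s))
    (lam : ℕ → F)
    (hdist : ∀ i < n * s, ∀ j < n * s, lam i = lam j → i = j)
    (hloc : LocalConstraints lam s s ℓ (n / s))
    (c t : ℕ) (hc : 1 ≤ c)
    (a : ℕ → ℕ) (ha : ∀ m < c, a m < n / s)
    (hainj : ∀ m₁ < c, ∀ m₂ < c, a m₁ = a m₂ → m₁ = m₂)
    (B : ℕ → Finset ℕ) (hBsub : ∀ m < c, B m ⊆ Finset.range s)
    (hBne : ∀ m < c, (B m).Nonempty)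
    (hsum : ∑ m ∈ Finset.range c, (B m).card = t)
    (htr : t ≤ n - k) :
    (MultiCat lam s s ℓ t c a B).det ≠ 0 := by
  have : NeZero s := ⟨by lia⟩
  have : NeZero (n / s) := ⟨(Nat.div_pos (by lia) (NeZero.pos s)).ne'⟩
  have hdist' : Set.InjOn lam (Set.Iio (n / s * s * s)) := by
    rw [Nat.div_mul_cancel hdiv]
    exact fun i hi j hj => hdist i hi j hj
  subst hℓ
  exact statement1_general s s (n / s) lam hdist' hloc c t a ha (fun i hi j hj => hainj i hi j hj)
    B hBsub hBne hsum
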